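/- arXiv:2103.01549 — 6 statements merged into one kernel-verified Lean document; each statement's English description precedes it below -/
import Mathlib

section
/- (Atiyah–Ward ansätz) Let U ⊆ ℂ⁵ be open and let φ : U → ℂ be twice continuously differentiable, nowhere zero, and satisfying the sub-Laplacian equation Δ_bφ := V₀₀′(V₁₁′φ) − V₁₀′(V₀₁′φ) = 0 on U. Write a_{AA′} = (V_{AA′}φ)/φ, and define the 2×2 matrix-valued functions Φ₀₀′ = [[½a₀₀′, a₀₁′],[0, −½a₀₀′]], Φ₁₀′ = [[½a₁₀′, a₁₁′],[0, −½a₁₀′]], Φ₀₁′ = [[−½a₀₁′, 0],[a₀₀′, ½a₀₁′]], Φ₁₁′ = [[−½a₁₁′, 0],[a₁₀′, ½a₁₁′]]. Then these satisfy the three ASD Yang–Mills equations on U: (i) V₀₀′Φ₁₀′ − V₁₀′Φ₀₀′ + [Φ₀₀′,Φ₁₀′] = 0; (ii) V₀₁′Φ₁₀′ + V₀₀′Φ₁₁′ − V₁₀′Φ₀₁′ − V₁₁′Φ₀₀′ + [Φ₀₀′,Φ₁₁′] + [Φ₀₁′,Φ₁₀′] = 0; (iii) V₀₁′Φ₁₁′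 − V₁₁′Φ₀₁′ + [Φ₀₁′,Φ₁₁′] = 0. Hence the connection form Φ = Σ Φ_{AA′}θ^{AA′} + Φ_Tθ is anti-self-dual. -/
/-- Complex partial derivative in the `i`-th coordinate direction on `ℂ⁵`. -/
noncomputable def pd (i : Fin 5) (f : (Fin 5 → ℂ) → ℂ) (y : Fin 5 → ℂ) : ℂ :=
  fderiv ℂ f y (Pi.single i 1)

/-- Coordinates on `ℂ⁵` are `(y₀₀′, y₁₀′, y₀₁′, y₁₁′, t)`, with indices `0,1,2,3,4`. -/
noncomputable def V00 (f : (Fin 5 → ℂ) → ℂ) (y : Fin 5 → ℂ) : ℂ := pd 0 f y - y 3 * pd 4 f y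
noncomputable def V01 (f : (Fin 5 → ℂ) → ℂ) (y : Fin 5 → ℂ) : ℂ := pd 2 f y + y 1 * pd 4 f y
noncomputable def V10 (f : (Fin 5 → ℂ) → ℂ) (y : Fin 5 → ℂ) : ℂ := pd 1 f y - y 2 * pd 4 f y
noncomputable def V11 (f : (Fin 5 → ℂ) → ℂ) (y : Fin 5 → ℂ) : ℂ := pd 3 f y + y 0 * pd 4 f y
noncomputable def T5 (f : (Fin 5 → ℂ) → ℂ) (y : Fin 5 → ℂ) : ℂ := pd 4 f y
/-- The vector fields acting entrywise on matrix-valued functions. -/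
noncomputable def V00M {n : ℕ} (Φ : (Fin 5 → ℂ) → Matrix (Fin n) (Fin n) ℂ)
    (y : Fin 5 → ℂ) : Matrix (Fin n) (Fin n) ℂ :=
  Matrix.of fun i j => V00 (fun p => Φ p i j) y

noncomputable def V01M {n : ℕ} (Φ : (Fin 5 → ℂ) → Matrix (Fin n) (Fin n) ℂ)
    (y : Fin 5 → ℂ) : Matrix (Fin n) (Fin n) ℂ :=
  Matrix.of fun i j => V01 (fun p => Φ p i j) y

noncomputable def V10M {n : ℕ} (Φ : (Fin 5 → ℂ) → Matrix (Fin n) (Fin n) ℂ)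
    (y : Fin 5 → ℂ) : Matrix (Fin n) (Fin n) ℂ :=
  Matrix.of fun i j => V10 (fun p => Φ p i j) y

noncomputable def V11M {n : ℕ} (Φ : (Fin 5 → ℂ) → Matrix (Fin n) (Fin n) ℂ)
    (y : Fin 5 → ℂ) : Matrix (Fin n) (Fin n) ℂ :=
  Matrix.of fun i j => V11 (fun p => Φ p i j) y

/-- `a_{AA′} = (V_{AA′}φ)/φ`. -/
noncomputable def a00 (φ : (Fin 5 → ℂ) → ℂ) (p : Fin 5 → ℂ) : ℂ := V00 φ p / φ p
noncomputable def a01 (φ : (Fin 5 → ℂ) → ℂ) (p : Fin 5 → ℂ) : ℂ := V01 φ p / φ p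
noncomputable def a10 (φ : (Fin 5 → ℂ) → ℂ) (p : Fin 5 → ℂ) : ℂ := V10 φ p / φ p
noncomputable def a11 (φ : (Fin 5 → ℂ) → ℂ) (p : Fin 5 → ℂ) : ℂ := V11 φ p / φ p

/-- The Atiyah–Ward connection components. -/
noncomputable def AW00 (φ : (Fin 5 → ℂ) → ℂ) (p : Fin 5 → ℂ) : Matrix (Fin 2) (Fin 2) ℂ :=
  !![(1 / 2) * a00 φ p, a01 φ p; 0, -((1 / 2) * a00 φ p)]
noncomputable def AW10 (φ : (Fin 5 → ℂ) → ℂ) (p : Fin 5 → ℂ) : Matrix (Fin 2) (Fin 2) ℂ :=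
  !![(1 / 2) * a10 φ p, a11 φ p; 0, -((1 / 2) * a10 φ p)]
noncomputable def AW01 (φ : (Fin 5 → ℂ) → ℂ) (p : Fin 5 → ℂ) : Matrix (Fin 2) (Fin 2) ℂ :=
  !![-((1 / 2) * a01 φ p), 0; a00 φ p, (1 / 2) * a01 φ p]
noncomputable def AW11 (φ : (Fin 5 → ℂ) → ℂ) (p : Fin 5 → ℂ) : Matrix (Fin 2) (Fin 2) ℂ :=
  !![-((1 / 2) * a11 φ p), 0; a10 φ p, (1 / 2) * a11 φ p]

/-! ### Calculus of `pd` -/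

lemma pd_const_mul (i : Fin 5) (c : ℂ) (f : (Fin 5 → ℂ) → ℂ) (y : Fin 5 → ℂ) :
    pd i (fun p => c * f p) y = c * pd i f y := by
  simp only [pd]
  rw [show (fun p => c * f p) = c • f from rfl, fderiv_const_smul_field]
  rfl

lemma pd_neg (i : Fin 5) (f : (Fin 5 → ℂ) → ℂ) (y : Fin 5 → ℂ) :
    pd i (fun p => -f p) y = -pd i f y := by
  simp [pd, fderiv_fun_neg]

lemma pd_const (i : Fin 5) (c : ℂ) (y : Fin 5 → ℂ) : pd i (fun _ => c) y = 0 := by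
  simp [pd]

lemma pd_div {f g : (Fin 5 → ℂ) → ℂ} {y : Fin 5 → ℂ} (i : Fin 5)
    (hf : DifferentiableAt ℂ f y) (hg : DifferentiableAt ℂ g y) (h0 : g y ≠ 0) :
    pd i (fun p => f p / g p) y = pd i f y / g y - f y / g y * (pd i g y / g y) := by
  have h := (HasFDerivAt.fun_mul hf.hasFDerivAt
    ((hasFDerivAt_inv h0).comp y hg.hasFDerivAt)).fderiv
  simp only [pd, div_eq_mul_inv]
  erw [h]
  simp
  field_simp
  ring

lemma pd_coord_mul {f : (Fin 5 → ℂ) → ℂ} {y : Fin 5 → ℂ} (i k : Fin 5)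
    (hf : DifferentiableAt ℂ f y) :
    pd i (fun p => p k * f p) y = (Pi.single i 1 : Fin 5 → ℂ) k * f y + y k * pd i f y := by
  have h := ((hasFDerivAt_apply (𝕜 := ℂ) k y).mul hf.hasFDerivAt).fderiv
  simp only [pd]
  erw [h]
  simp
  ring

lemma pd_add {f g : (Fin 5 → ℂ) → ℂ} {y : Fin 5 → ℂ} (i : Fin 5)
    (hf : DifferentiableAt ℂ f y) (hg : DifferentiableAt ℂ g y) :
    pd i (fun p => f p + g p) y = pd i f y + pd i g y := by
  simp [pd, fderiv_fun_add hf hg]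

lemma pd_sub {f g : (Fin 5 → ℂ) → ℂ} {y : Fin 5 → ℂ} (i : Fin 5)
    (hf : DifferentiableAt ℂ f y) (hg : DifferentiableAt ℂ g y) :
    pd i (fun p => f p - g p) y = pd i f y - pd i g y := by
  simp [pd, fderiv_fun_sub hf hg]

section SecondOrder

variable {φ : (Fin 5 → ℂ) → ℂ} {y : Fin 5 → ℂ}

lemma differentiableAt_fderiv_of_contDiffAt_two (h : ContDiffAt ℂ 2 φ y) :
    DifferentiableAt ℂ (fderiv ℂ φ) y :=
  (h.fderiv_right (m := 1) (by norm_num)).differentiableAt (by norm_num)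

lemma differentiableAt_pd (h : ContDiffAt ℂ 2 φ y) (j : Fin 5) :
    DifferentiableAt ℂ (pd j φ) y :=
  (differentiableAt_fderiv_of_contDiffAt_two h).clm_apply (differentiableAt_const _)

lemma differentiableAt_coord_mul_pd (h : ContDiffAt ℂ 2 φ y) (k j : Fin 5) :
    DifferentiableAt ℂ (fun p : Fin 5 → ℂ => p k * pd j φ p) y :=
  (differentiableAt_apply k y).mul (differentiableAt_pd h j)

lemma pd_pd (h : ContDiffAt ℂ 2 φ y) (i j : Fin 5) :
    pd i (pd j φ) y = fderiv ℂ (fderiv ℂ φ) y (Pi.single i 1) (Pi.single j 1) := by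
  have := fderiv_clm_apply (differentiableAt_fderiv_of_contDiffAt_two h)
    (differentiableAt_const (Pi.single j 1 : Fin 5 → ℂ))
  change fderiv ℂ (fun p => fderiv ℂ φ p (Pi.single j 1)) y (Pi.single i 1) = _
  simp [this]

lemma pd_comm (h : ContDiffAt ℂ 2 φ y) (i j : Fin 5) :
    pd i (pd j φ) y = pd j (pd i φ) y := by
  rw [pd_pd h, pd_pd h]
  exact h.isSymmSndFDerivAt (by simp) _ _

lemma pd_V00 (h : ContDiffAt ℂ 2 φ y) (i : Fin 5) :
    pd i (V00 φ) y = pd i (pd 0 φ) y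
      - ((Pi.single i 1 : Fin 5 → ℂ) 3 * pd 4 φ y + y 3 * pd i (pd 4 φ) y) := by
  rw [← pd_coord_mul i 3 (differentiableAt_pd h 4)]
  exact pd_sub i (differentiableAt_pd h 0) (differentiableAt_coord_mul_pd h 3 4)

lemma pd_V10 (h : ContDiffAt ℂ 2 φ y) (i : Fin 5) :
    pd i (V10 φ) y = pd i (pd 1 φ) y
      - ((Pi.single i 1 : Fin 5 → ℂ) 2 * pd 4 φ y + y 2 * pd i (pd 4 φ) y) := by
  rw [← pd_coord_mul i 2 (differentiableAt_pd h 4)]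
  exact pd_sub i (differentiableAt_pd h 1) (differentiableAt_coord_mul_pd h 2 4)

lemma pd_V01 (h : ContDiffAt ℂ 2 φ y) (i : Fin 5) :
    pd i (V01 φ) y = pd i (pd 2 φ) y
      + ((Pi.single i 1 : Fin 5 → ℂ) 1 * pd 4 φ y + y 1 * pd i (pd 4 φ) y) := by
  rw [← pd_coord_mul i 1 (differentiableAt_pd h 4)]
  exact pd_add i (differentiableAt_pd h 2) (differentiableAt_coord_mul_pd h 1 4)

lemma pd_V11 (h : ContDiffAt ℂ 2 φ y) (i : Fin 5) :
    pd i (V11 φ) y = pd i (pd 3 φ) y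
      + ((Pi.single i 1 : Fin 5 → ℂ) 0 * pd 4 φ y + y 0 * pd i (pd 4 φ) y) := by
  rw [← pd_coord_mul i 0 (differentiableAt_pd h 4)]
  exact pd_add i (differentiableAt_pd h 3) (differentiableAt_coord_mul_pd h 0 4)

/-! ### Commutation relations of the left-invariant fields -/

lemma V00_V10_comm (h : ContDiffAt ℂ 2 φ y) : V00 (V10 φ) y = V10 (V00 φ) y := by
  rw [V00, V10, pd_V10 h, pd_V10 h, pd_V00 h, pd_V00 h, pd_comm h 1 0, pd_comm h 4 0,
    pd_comm h 4 1]
  simp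
  ring

lemma V01_V11_comm (h : ContDiffAt ℂ 2 φ y) : V01 (V11 φ) y = V11 (V01 φ) y := by
  rw [V01, V11, pd_V11 h, pd_V11 h, pd_V01 h, pd_V01 h, pd_comm h 3 2, pd_comm h 4 2,
    pd_comm h 4 3]
  simp
  ring

lemma V00_V11_commutator (h : ContDiffAt ℂ 2 φ y) :
    V00 (V11 φ) y - V11 (V00 φ) y = 2 * T5 φ y := by
  rw [V00, V11, T5, pd_V11 h, pd_V11 h, pd_V00 h, pd_V00 h, pd_comm h 3 0, pd_comm h 4 0,
    pd_comm h 4 3]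
  simp
  ring

lemma V10_V01_commutator (h : ContDiffAt ℂ 2 φ y) :
    V10 (V01 φ) y - V01 (V10 φ) y = 2 * T5 φ y := by
  rw [V10, V01, T5, pd_V01 h, pd_V01 h, pd_V10 h, pd_V10 h, pd_comm h 2 1, pd_comm h 4 1,
    pd_comm h 4 2]
  simp
  ring

lemma differentiableAt_V00 (h : ContDiffAt ℂ 2 φ y) : DifferentiableAt ℂ (V00 φ) y :=
  (differentiableAt_pd h 0).sub (differentiableAt_coord_mul_pd h 3 4)

lemma differentiableAt_V10 (h : ContDiffAt ℂ 2 φ y) : DifferentiableAt ℂ (V10 φ) y :=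
  (differentiableAt_pd h 1).sub (differentiableAt_coord_mul_pd h 2 4)

lemma differentiableAt_V01 (h : ContDiffAt ℂ 2 φ y) : DifferentiableAt ℂ (V01 φ) y :=
  (differentiableAt_pd h 2).add (differentiableAt_coord_mul_pd h 1 4)

lemma differentiableAt_V11 (h : ContDiffAt ℂ 2 φ y) : DifferentiableAt ℂ (V11 φ) y :=
  (differentiableAt_pd h 3).add (differentiableAt_coord_mul_pd h 0 4)

end SecondOrder

/-! ### The fields as derivations -/

lemma V00_const_mul (c : ℂ) (f : (Fin 5 → ℂ) → ℂ) (y : Fin 5 → ℂ) :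
    V00 (fun p => c * f p) y = c * V00 f y := by
  simp only [V00, pd_const_mul]; ring

lemma V00_neg (f : (Fin 5 → ℂ) → ℂ) (y : Fin 5 → ℂ) :
    V00 (fun p => -f p) y = -V00 f y := by
  simp only [V00, pd_neg]; ring

lemma V00_const (c : ℂ) (y : Fin 5 → ℂ) : V00 (fun _ => c) y = 0 := by
  simp [V00, pd_const]

lemma V00_div {f g : (Fin 5 → ℂ) → ℂ} {y : Fin 5 → ℂ} (hf : DifferentiableAt ℂ f y)
    (hg : DifferentiableAt ℂ g y) (h0 : g y ≠ 0) :
    V00 (fun p => f p / g p) y = V00 f y / g y - f y / g y * (V00 g y / g y) := by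
  simp only [V00, pd_div _ hf hg h0]; ring

lemma V10_const_mul (c : ℂ) (f : (Fin 5 → ℂ) → ℂ) (y : Fin 5 → ℂ) :
    V10 (fun p => c * f p) y = c * V10 f y := by
  simp only [V10, pd_const_mul]; ring

lemma V10_neg (f : (Fin 5 → ℂ) → ℂ) (y : Fin 5 → ℂ) :
    V10 (fun p => -f p) y = -V10 f y := by
  simp only [V10, pd_neg]; ring

lemma V10_const (c : ℂ) (y : Fin 5 → ℂ) : V10 (fun _ => c) y = 0 := by
  simp [V10, pd_const]

lemma V10_div {f g : (Fin 5 → ℂ) → ℂ} {y : Fin 5 → ℂ} (hf : DifferentiableAt ℂ f y)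
    (hg : DifferentiableAt ℂ g y) (h0 : g y ≠ 0) :
    V10 (fun p => f p / g p) y = V10 f y / g y - f y / g y * (V10 g y / g y) := by
  simp only [V10, pd_div _ hf hg h0]; ring

lemma V01_const_mul (c : ℂ) (f : (Fin 5 → ℂ) → ℂ) (y : Fin 5 → ℂ) :
    V01 (fun p => c * f p) y = c * V01 f y := by
  simp only [V01, pd_const_mul]; ring

lemma V01_neg (f : (Fin 5 → ℂ) → ℂ) (y : Fin 5 → ℂ) :
    V01 (fun p => -f p) y = -V01 f y := by
  simp only [V01, pd_neg]; ring

lemma V01_const (c : ℂ) (y : Fin 5 → ℂ) : V01 (fun _ => c) y = 0 := by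
  simp [V01, pd_const]

lemma V01_div {f g : (Fin 5 → ℂ) → ℂ} {y : Fin 5 → ℂ} (hf : DifferentiableAt ℂ f y)
    (hg : DifferentiableAt ℂ g y) (h0 : g y ≠ 0) :
    V01 (fun p => f p / g p) y = V01 f y / g y - f y / g y * (V01 g y / g y) := by
  simp only [V01, pd_div _ hf hg h0]; ring

lemma V11_const_mul (c : ℂ) (f : (Fin 5 → ℂ) → ℂ) (y : Fin 5 → ℂ) :
    V11 (fun p => c * f p) y = c * V11 f y := by
  simp only [V11, pd_const_mul]; ring

lemma V11_neg (f : (Fin 5 → ℂ) → ℂ) (y : Fin 5 → ℂ) :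
    V11 (fun p => -f p) y = -V11 f y := by
  simp only [V11, pd_neg]; ring

lemma V11_const (c : ℂ) (y : Fin 5 → ℂ) : V11 (fun _ => c) y = 0 := by
  simp [V11, pd_const]

lemma V11_div {f g : (Fin 5 → ℂ) → ℂ} {y : Fin 5 → ℂ} (hf : DifferentiableAt ℂ f y)
    (hg : DifferentiableAt ℂ g y) (h0 : g y ≠ 0) :
    V11 (fun p => f p / g p) y = V11 f y / g y - f y / g y * (V11 g y / g y) := by
  simp only [V11, pd_div _ hf hg h0]; ring

/-! ### First derivatives of the logarithmic derivatives `a_{AA′}` -/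

section LogDerivative

variable {φ : (Fin 5 → ℂ) → ℂ} {y : Fin 5 → ℂ}

lemma V00_a10 (h : ContDiffAt ℂ 2 φ y) (h0 : φ y ≠ 0) :
    V00 (a10 φ) y = V00 (V10 φ) y / φ y - a10 φ y * a00 φ y :=
  V00_div (differentiableAt_V10 h) (h.differentiableAt (by norm_num)) h0

lemma V10_a00 (h : ContDiffAt ℂ 2 φ y) (h0 : φ y ≠ 0) :
    V10 (a00 φ) y = V10 (V00 φ) y / φ y - a00 φ y * a10 φ y :=
  V10_div (differentiableAt_V00 h) (h.differentiableAt (by norm_num)) h0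

lemma V01_a10 (h : ContDiffAt ℂ 2 φ y) (h0 : φ y ≠ 0) :
    V01 (a10 φ) y = V01 (V10 φ) y / φ y - a10 φ y * a01 φ y :=
  V01_div (differentiableAt_V10 h) (h.differentiableAt (by norm_num)) h0

lemma V00_a11 (h : ContDiffAt ℂ 2 φ y) (h0 : φ y ≠ 0) :
    V00 (a11 φ) y = V00 (V11 φ) y / φ y - a11 φ y * a00 φ y :=
  V00_div (differentiableAt_V11 h) (h.differentiableAt (by norm_num)) h0

lemma V10_a01 (h : ContDiffAt ℂ 2 φ y) (h0 : φ y ≠ 0) :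
    V10 (a01 φ) y = V10 (V01 φ) y / φ y - a01 φ y * a10 φ y :=
  V10_div (differentiableAt_V01 h) (h.differentiableAt (by norm_num)) h0

lemma V11_a00 (h : ContDiffAt ℂ 2 φ y) (h0 : φ y ≠ 0) :
    V11 (a00 φ) y = V11 (V00 φ) y / φ y - a00 φ y * a11 φ y :=
  V11_div (differentiableAt_V00 h) (h.differentiableAt (by norm_num)) h0

lemma V01_a11 (h : ContDiffAt ℂ 2 φ y) (h0 : φ y ≠ 0) :
    V01 (a11 φ) y = V01 (V11 φ) y / φ y - a11 φ y * a01 φ y :=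
  V01_div (differentiableAt_V11 h) (h.differentiableAt (by norm_num)) h0

lemma V11_a01 (h : ContDiffAt ℂ 2 φ y) (h0 : φ y ≠ 0) :
    V11 (a01 φ) y = V11 (V01 φ) y / φ y - a01 φ y * a11 φ y :=
  V11_div (differentiableAt_V01 h) (h.differentiableAt (by norm_num)) h0

lemma V00_a10_comm (h : ContDiffAt ℂ 2 φ y) (h0 : φ y ≠ 0) :
    V00 (a10 φ) y = V10 (a00 φ) y := by
  rw [V00_a10 h h0, V10_a00 h h0, V00_V10_comm h, mul_comm]

lemma V01_a11_comm (h : ContDiffAt ℂ 2 φ y) (h0 : φ y ≠ 0) :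
    V01 (a11 φ) y = V11 (a01 φ) y := by
  rw [V01_a11 h h0, V11_a01 h h0, V01_V11_comm h, mul_comm]

lemma V00_a11_sub_V10_a01 (h : ContDiffAt ℂ 2 φ y) (h0 : φ y ≠ 0)
    (hlap : V00 (V11 φ) y - V10 (V01 φ) y = 0) :
    V00 (a11 φ) y - V10 (a01 φ) y = a10 φ y * a01 φ y - a00 φ y * a11 φ y := by
  rw [V00_a11 h h0, V10_a01 h h0]
  linear_combination hlap / φ y

lemma V11_a00_sub_V01_a10 (h : ContDiffAt ℂ 2 φ y) (h0 : φ y ≠ 0)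
    (hlap : V00 (V11 φ) y - V10 (V01 φ) y = 0) :
    V11 (a00 φ) y - V01 (a10 φ) y = a10 φ y * a01 φ y - a00 φ y * a11 φ y := by
  rw [V11_a00 h h0, V01_a10 h h0]
  linear_combination (hlap - V00_V11_commutator h + V10_V01_commutator h) / φ y

end LogDerivative

/-! ### Derivatives of the connection components -/

section Connection

variable (φ : (Fin 5 → ℂ) → ℂ) (y : Fin 5 → ℂ)

lemma V00M_AW10 : V00M (AW10 φ) y =
    !![1 / 2 * V00 (a10 φ) y, V00 (a11 φ) y; 0, -(1 / 2 * V00 (a10 φ) y)] := by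
  rw [← V00_const_mul, ← V00_neg, ← V00_const 0 y]
  ext i j
  fin_cases i <;> fin_cases j <;> rfl

lemma V10M_AW00 : V10M (AW00 φ) y =
    !![1 / 2 * V10 (a00 φ) y, V10 (a01 φ) y; 0, -(1 / 2 * V10 (a00 φ) y)] := by
  rw [← V10_const_mul, ← V10_neg, ← V10_const 0 y]
  ext i j
  fin_cases i <;> fin_cases j <;> rfl

lemma V01M_AW10 : V01M (AW10 φ) y =
    !![1 / 2 * V01 (a10 φ) y, V01 (a11 φ) y; 0, -(1 / 2 * V01 (a10 φ) y)] := by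
  rw [← V01_const_mul, ← V01_neg, ← V01_const 0 y]
  ext i j
  fin_cases i <;> fin_cases j <;> rfl

lemma V00M_AW11 : V00M (AW11 φ) y =
    !![-(1 / 2 * V00 (a11 φ) y), 0; V00 (a10 φ) y, 1 / 2 * V00 (a11 φ) y] := by
  rw [← V00_const_mul, ← V00_neg, ← V00_const 0 y]
  ext i j
  fin_cases i <;> fin_cases j <;> rfl

lemma V10M_AW01 : V10M (AW01 φ) y =
    !![-(1 / 2 * V10 (a01 φ) y), 0; V10 (a00 φ) y, 1 / 2 * V10 (a01 φ) y] := by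
  rw [← V10_const_mul, ← V10_neg, ← V10_const 0 y]
  ext i j
  fin_cases i <;> fin_cases j <;> rfl

lemma V11M_AW00 : V11M (AW00 φ) y =
    !![1 / 2 * V11 (a00 φ) y, V11 (a01 φ) y; 0, -(1 / 2 * V11 (a00 φ) y)] := by
  rw [← V11_const_mul, ← V11_neg, ← V11_const 0 y]
  ext i j
  fin_cases i <;> fin_cases j <;> rfl

lemma V01M_AW11 : V01M (AW11 φ) y =
    !![-(1 / 2 * V01 (a11 φ) y), 0; V01 (a10 φ) y, 1 / 2 * V01 (a11 φ) y] := by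
  rw [← V01_const_mul, ← V01_neg, ← V01_const 0 y]
  ext i j
  fin_cases i <;> fin_cases j <;> rfl

lemma V11M_AW01 : V11M (AW01 φ) y =
    !![-(1 / 2 * V11 (a01 φ) y), 0; V11 (a00 φ) y, 1 / 2 * V11 (a01 φ) y] := by
  rw [← V11_const_mul, ← V11_neg, ← V11_const 0 y]
  ext i j
  fin_cases i <;> fin_cases j <;> rfl

end Connection

/-- Atiyah–Ward ansätz: if `φ` is `C²`, nowhere zero and satisfies the sub-Laplacian
equation `Δ_bφ = V₀₀′V₁₁′φ − V₁₀′V₀₁′φ = 0` on an open set `U`, then the associated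
`2×2` connection components satisfy the three ASD Yang–Mills equations on `U`. -/
theorem atiyah_ward_ansatz (U : Set (Fin 5 → ℂ)) (hU : IsOpen U)
    (φ : (Fin 5 → ℂ) → ℂ)
    (hφ : ∀ y ∈ U, ContDiffAt ℂ 2 φ y)
    (hne : ∀ y ∈ U, φ y ≠ 0)
    (hlap : ∀ y ∈ U, V00 (V11 φ) y - V10 (V01 φ) y = 0) :
    (∀ y ∈ U, V00M (AW10 φ) y - V10M (AW00 φ) y
        + (AW00 φ y * AW10 φ y - AW10 φ y * AW00 φ y) = 0) ∧
    (∀ y ∈ U, V01M (AW10 φ) y + V00M (AW11 φ) y - V10M (AW01 φ) y - V11M (AW00 φ) y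
        + (AW00 φ y * AW11 φ y - AW11 φ y * AW00 φ y)
        + (AW01 φ y * AW10 φ y - AW10 φ y * AW01 φ y) = 0) ∧
    (∀ y ∈ U, V01M (AW11 φ) y - V11M (AW01 φ) y
        + (AW01 φ y * AW11 φ y - AW11 φ y * AW01 φ y) = 0) := by
  refine ⟨fun y hy => ?_, fun y hy => ?_, fun y hy => ?_⟩
  · have hc := V00_a10_comm (hφ y hy) (hne y hy)
    have hl := V00_a11_sub_V10_a01 (hφ y hy) (hne y hy) (hlap y hy)
    rw [V00M_AW10, V10M_AW00, AW00, AW10]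
    ext i j
    fin_cases i <;> fin_cases j <;> simp
    · linear_combination hc / 2
    · linear_combination hl
    · linear_combination -hc / 2
  · have hc := V00_a10_comm (hφ y hy) (hne y hy)
    have hd := V01_a11_comm (hφ y hy) (hne y hy)
    have hl := V00_a11_sub_V10_a01 (hφ y hy) (hne y hy) (hlap y hy)
    have hm := V11_a00_sub_V01_a10 (hφ y hy) (hne y hy) (hlap y hy)
    rw [V01M_AW10, V00M_AW11, V10M_AW01, V11M_AW00, AW00, AW10, AW01, AW11]
    ext i j
    fin_cases i <;> fin_cases j <;> simp
    · linear_combination -(hl + hm) / 2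
    · linear_combination hd
    · linear_combination hc
    · linear_combination (hl + hm) / 2
  · have hd := V01_a11_comm (hφ y hy) (hne y hy)
    have hm := V11_a00_sub_V01_a10 (hφ y hy) (hne y hy) (hlap y hy)
    rw [V01M_AW11, V11M_AW01, AW01, AW11]
    ext i j
    fin_cases i <;> fin_cases j <;> simp
    · linear_combination -hd / 2
    · linear_combination -hm
    · linear_combination hd / 2
end

section
/- The function φ(y, t) = 1/((y₀₀′y₁₁′ − y₁₀′y₀₁′)² − t²) satisfies the sub-Laplacian equation Δ_bφ = V₀₀′(V₁₁′φ) − V₁₀′(V₀₁′φ) = 0 on the open set {(y, t) ∈ ℂ⁵ : (y₀₀′y₁₁′ − y₁₀′y₀₁′)² ≠ t²}. -/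
/-- `φ(y,t) = 1/(‖y‖⁴ − t²)` with `‖y‖² = y₀₀′y₁₁′ − y₁₀′y₀₁′`. -/
noncomputable def phiH (p : Fin 5 → ℂ) : ℂ :=
  1 / ((p 0 * p 3 - p 1 * p 2) ^ 2 - (p 4) ^ 2)

/-- The denominator `‖y‖⁴ − t²` of `phiH`. -/
noncomputable def phiDenom (p : Fin 5 → ℂ) : ℂ :=
  (p 0 * p 3 - p 1 * p 2) ^ 2 - (p 4) ^ 2

lemma hasFDerivAt_coord (i : Fin 5) (p : Fin 5 → ℂ) :
    HasFDerivAt (fun q : Fin 5 → ℂ => q i)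
      (ContinuousLinearMap.proj i : (Fin 5 → ℂ) →L[ℂ] ℂ) p :=
  (ContinuousLinearMap.proj i : (Fin 5 → ℂ) →L[ℂ] ℂ).hasFDerivAt

lemma hasFDerivAt_det (p : Fin 5 → ℂ) :
    HasFDerivAt (fun q : Fin 5 → ℂ => q 0 * q 3 - q 1 * q 2)
      ((p 0 • ContinuousLinearMap.proj 3 + p 3 • ContinuousLinearMap.proj 0)
        - (p 1 • ContinuousLinearMap.proj 2 + p 2 • ContinuousLinearMap.proj 1) :
        (Fin 5 → ℂ) →L[ℂ] ℂ) p :=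
  ((hasFDerivAt_coord 0 p).mul (hasFDerivAt_coord 3 p)).sub
    ((hasFDerivAt_coord 1 p).mul (hasFDerivAt_coord 2 p))

lemma hasFDerivAt_phiDenom (p : Fin 5 → ℂ) :
    HasFDerivAt phiDenom
      ((2 * (p 0 * p 3 - p 1 * p 2)) •
        ((p 0 • ContinuousLinearMap.proj 3 + p 3 • ContinuousLinearMap.proj 0)
          - (p 1 • ContinuousLinearMap.proj 2 + p 2 • ContinuousLinearMap.proj 1))
        - (2 * p 4) • ContinuousLinearMap.proj 4 : (Fin 5 → ℂ) →L[ℂ] ℂ) p := by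
  simpa using! ((hasFDerivAt_det p).pow 2).sub ((hasFDerivAt_coord 4 p).pow 2)

lemma hasFDerivAt_phiH {p : Fin 5 → ℂ} (hp : phiDenom p ≠ 0) :
    HasFDerivAt phiH (-(phiDenom p ^ 2)⁻¹ • fderiv ℂ phiDenom p) p := by
  have hd := (hasFDerivAt_phiDenom p).differentiableAt.hasFDerivAt
  have h := (hasDerivAt_inv hp).comp_hasFDerivAt p hd
  refine h.congr_of_eventuallyEq (Filter.Eventually.of_forall fun q => ?_)
  simp [phiH, phiDenom]

lemma V11_phiH {p : Fin 5 → ℂ} (hp : phiDenom p ≠ 0) :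
    V11 phiH p = p 0 * (-2 * ((p 0 * p 3 - p 1 * p 2) - p 4)) * (phiDenom p ^ 2)⁻¹ := by
  simp [V11, pd, (hasFDerivAt_phiH hp).fderiv, (hasFDerivAt_phiDenom p).fderiv]
  ring

lemma V01_phiH {p : Fin 5 → ℂ} (hp : phiDenom p ≠ 0) :
    V01 phiH p = p 1 * (2 * ((p 0 * p 3 - p 1 * p 2) + p 4)) * (phiDenom p ^ 2)⁻¹ := by
  simp [V01, pd, (hasFDerivAt_phiH hp).fderiv, (hasFDerivAt_phiDenom p).fderiv]
  ring

lemma eventually_phiDenom_ne_zero {p : Fin 5 → ℂ} (hp : phiDenom p ≠ 0) :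
    ∀ᶠ q in nhds p, phiDenom q ≠ 0 :=
  (hasFDerivAt_phiDenom p).continuousAt.eventually_ne hp

lemma hasFDerivAt_inv_phiDenom_sq {p : Fin 5 → ℂ} (hp : phiDenom p ≠ 0) :
    HasFDerivAt (fun q => (phiDenom q ^ 2)⁻¹)
      ((-2 * (phiDenom p ^ 3)⁻¹) • fderiv ℂ phiDenom p) p := by
  have hd := (hasFDerivAt_phiDenom p).differentiableAt.hasFDerivAt
  have h := (hasDerivAt_inv (pow_ne_zero 2 hp)).comp_hasFDerivAt p (hd.pow 2)
  refine h.congr_fderiv ?_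
  ext v
  simp
  field_simp

lemma V00_V11_phiH {p : Fin 5 → ℂ} (hp : phiDenom p ≠ 0) :
    V00 (V11 phiH) p = (4 * (p 0 * p 3) - 2 * ((p 0 * p 3 - p 1 * p 2) - p 4))
      * (phiDenom p ^ 2)⁻¹ := by
  have h := (((hasFDerivAt_coord 0 p).mul
    (((hasFDerivAt_det p).sub (hasFDerivAt_coord 4 p)).const_mul (-2))).mul
      (hasFDerivAt_inv_phiDenom_sq hp)).congr_of_eventuallyEq
      ((eventually_phiDenom_ne_zero hp).mono fun q hq => V11_phiH hq)
  simp [V00, pd, h.fderiv, (hasFDerivAt_phiDenom p).fderiv]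
  field_simp
  simp only [phiDenom]
  ring

lemma V10_V01_phiH {p : Fin 5 → ℂ} (hp : phiDenom p ≠ 0) :
    V10 (V01 phiH) p = (4 * (p 1 * p 2) + 2 * ((p 0 * p 3 - p 1 * p 2) + p 4))
      * (phiDenom p ^ 2)⁻¹ := by
  have h := (((hasFDerivAt_coord 1 p).mul
    (((hasFDerivAt_det p).add (hasFDerivAt_coord 4 p)).const_mul 2)).mul
      (hasFDerivAt_inv_phiDenom_sq hp)).congr_of_eventuallyEq
      ((eventually_phiDenom_ne_zero hp).mono fun q hq => V01_phiH hq)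
  simp [V10, pd, h.fderiv, (hasFDerivAt_phiDenom p).fderiv]
  field_simp
  simp only [phiDenom]
  ring

/-- `φ = 1/(‖y‖⁴ − t²)` solves the sub-Laplacian equation
`Δ_bφ = V₀₀′(V₁₁′φ) − V₁₀′(V₀₁′φ) = 0` wherever `‖y‖⁴ ≠ t²`. -/
theorem phiH_harmonic (p : Fin 5 → ℂ)
    (h : (p 0 * p 3 - p 1 * p 2) ^ 2 ≠ (p 4) ^ 2) :
    V00 (V11 phiH) p - V10 (V01 phiH) p = 0 := by
  have hp : phiDenom p ≠ 0 := sub_ne_zero.mpr h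
  rw [V00_V11_phiH hp, V10_V01_phiH hp]
  ring
end

section
/- The function φ(x₁, x₂, x₃, x₄, s) = 1/((x₁² + x₂² + x₃² + x₄²)² + s²) satisfies the sub-Laplacian equation Δ_bφ := X₁²φ + X₂²φ + X₃²φ + X₄²φ = 0 on ℝ⁵ ∖ {0} (i.e. wherever (x₁² + x₂² + x₃² + x₄²)² + s² ≠ 0). -/
/-- Real partial derivative in the `i`-th coordinate direction on `ℝ⁵`. -/
noncomputable def pdR (i : Fin 5) (f : (Fin 5 → ℝ) → ℝ) (x : Fin 5 → ℝ) : ℝ :=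
  fderiv ℝ f x (Pi.single i 1)

/-- Coordinates on `ℝ⁵` are `(x₁, x₂, x₃, x₄, s)`, indexed by `0,…,4`. -/
noncomputable def X1 (f : (Fin 5 → ℝ) → ℝ) (x : Fin 5 → ℝ) : ℝ :=
  (1 / 2) * pdR 0 f x + x 1 * pdR 4 f x
noncomputable def X2 (f : (Fin 5 → ℝ) → ℝ) (x : Fin 5 → ℝ) : ℝ :=
  (1 / 2) * pdR 1 f x - x 0 * pdR 4 f x
noncomputable def X3 (f : (Fin 5 → ℝ) → ℝ) (x : Fin 5 → ℝ) : ℝ :=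
  (1 / 2) * pdR 2 f x + x 3 * pdR 4 f x
noncomputable def X4 (f : (Fin 5 → ℝ) → ℝ) (x : Fin 5 → ℝ) : ℝ :=
  (1 / 2) * pdR 3 f x - x 2 * pdR 4 f x

/-- `φ = 1/(|x|⁴ + s²)` on the real Heisenberg group. -/
noncomputable def phiR (x : Fin 5 → ℝ) : ℝ :=
  1 / ((x 0 ^ 2 + x 1 ^ 2 + x 2 ^ 2 + x 3 ^ 2) ^ 2 + (x 4) ^ 2)

/-- The fourth power `|x|⁴ + s²` of the Heisenberg gauge. -/
def gauge4 (x : Fin 5 → ℝ) : ℝ :=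
  (x 0 ^ 2 + x 1 ^ 2 + x 2 ^ 2 + x 3 ^ 2) ^ 2 + (x 4) ^ 2

lemma differentiable_gauge4 : Differentiable ℝ gauge4 := by
  unfold gauge4
  fun_prop

lemma eventually_gauge4_ne_zero {x : Fin 5 → ℝ} (h : gauge4 x ≠ 0) :
    ∀ᶠ y in nhds x, gauge4 y ≠ 0 :=
  differentiable_gauge4.continuous.continuousAt.eventually_ne h

lemma pdR_coord (i j : Fin 5) (x : Fin 5 → ℝ) :
    pdR i (fun y => y j) x = if j = i then 1 else 0 := by
  simp [pdR, fderiv_apply, Pi.single_apply]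

lemma pdR_const (i : Fin 5) (c : ℝ) (x : Fin 5 → ℝ) : pdR i (fun _ => c) x = 0 := by
  simp [pdR]

lemma pdR_add (i : Fin 5) {f g : (Fin 5 → ℝ) → ℝ} {x : Fin 5 → ℝ}
    (hf : DifferentiableAt ℝ f x) (hg : DifferentiableAt ℝ g x) :
    pdR i (fun y => f y + g y) x = pdR i f x + pdR i g x := by
  simp [pdR, fderiv_fun_add hf hg]

lemma pdR_sub (i : Fin 5) {f g : (Fin 5 → ℝ) → ℝ} {x : Fin 5 → ℝ}
    (hf : DifferentiableAt ℝ f x) (hg : DifferentiableAt ℝ g x) :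
    pdR i (fun y => f y - g y) x = pdR i f x - pdR i g x := by
  simp [pdR, fderiv_fun_sub hf hg]

lemma pdR_mul (i : Fin 5) {f g : (Fin 5 → ℝ) → ℝ} {x : Fin 5 → ℝ}
    (hf : DifferentiableAt ℝ f x) (hg : DifferentiableAt ℝ g x) :
    pdR i (fun y => f y * g y) x = f x * pdR i g x + g x * pdR i f x := by
  simp [pdR, fderiv_fun_mul hf hg]

lemma pdR_sq (i : Fin 5) {f : (Fin 5 → ℝ) → ℝ} {x : Fin 5 → ℝ}
    (hf : DifferentiableAt ℝ f x) :
    pdR i (fun y => f y ^ 2) x = 2 * f x * pdR i f x := by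
  simp only [pow_two, pdR_mul i hf hf]
  ring

lemma pdR_inv (i : Fin 5) {f : (Fin 5 → ℝ) → ℝ} {x : Fin 5 → ℝ}
    (hf : DifferentiableAt ℝ f x) (h : f x ≠ 0) :
    pdR i (fun y => (f y)⁻¹) x = -pdR i f x / f x ^ 2 := by
  have := (hasDerivAt_inv h).comp_hasFDerivAt x hf.hasFDerivAt
  have e := this.fderiv
  simp only [Function.comp_def] at e
  simp only [pdR, e, smul_apply, smul_eq_mul]
  field_simp

lemma pdR_congr (i : Fin 5) {f g : (Fin 5 → ℝ) → ℝ} {x : Fin 5 → ℝ}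
    (h : f =ᶠ[nhds x] g) : pdR i f x = pdR i g x := by
  rw [pdR, pdR, h.fderiv_eq]

lemma pdR_gauge4 (i : Fin 5) (x : Fin 5 → ℝ) :
    pdR i gauge4 x = 4 * (x 0 ^ 2 + x 1 ^ 2 + x 2 ^ 2 + x 3 ^ 2) *
      (x 0 * (if 0 = i then 1 else 0) + x 1 * (if 1 = i then 1 else 0) +
        x 2 * (if 2 = i then 1 else 0) + x 3 * (if 3 = i then 1 else 0)) +
      2 * x 4 * (if 4 = i then 1 else 0) := by
  unfold gauge4
  simp (disch := fun_prop) only [pdR_add, pdR_sq, pdR_coord]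
  ring

lemma pdR_phiR (i : Fin 5) {x : Fin 5 → ℝ} (h : gauge4 x ≠ 0) :
    pdR i phiR x = -pdR i gauge4 x / gauge4 x ^ 2 := by
  rw [← pdR_inv i (differentiable_gauge4 x) h]
  exact pdR_congr i (.of_forall fun y => one_div (gauge4 y))

/-- Differentiating a quotient by the square of `gauge4`. -/
lemma pdR_mul_inv_gauge4_sq (i : Fin 5) {f g : (Fin 5 → ℝ) → ℝ} {x : Fin 5 → ℝ}
    (hg : DifferentiableAt ℝ g x) (h : gauge4 x ≠ 0)
    (hfg : ∀ y, gauge4 y ≠ 0 → f y = g y * (gauge4 y ^ 2)⁻¹) :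
    pdR i f x =
      (pdR i g x * gauge4 x - 2 * g x * pdR i gauge4 x) / gauge4 x ^ 3 := by
  have hN := differentiable_gauge4 x
  have hN2 : DifferentiableAt ℝ (fun y => gauge4 y ^ 2) x := hN.pow 2
  rw [pdR_congr i ((eventually_gauge4_ne_zero h).mono hfg),
    pdR_mul i hg (hN2.fun_inv (pow_ne_zero 2 h)),
    pdR_inv i hN2 (pow_ne_zero 2 h), pdR_sq i hN]
  field_simp
  ring

lemma X1_phiR {x : Fin 5 → ℝ} (h : gauge4 x ≠ 0) :
    X1 phiR x = (-2 * ((x 0 ^ 2 + x 1 ^ 2 + x 2 ^ 2 + x 3 ^ 2) * x 0 + x 4 * x 1)) *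
      (gauge4 x ^ 2)⁻¹ := by
  simp only [X1, pdR_phiR _ h, pdR_gauge4]
  simp
  ring

lemma X1_X1_phiR {x : Fin 5 → ℝ} (h : gauge4 x ≠ 0) :
    X1 (X1 phiR) x =
      (8 * ((x 0 ^ 2 + x 1 ^ 2 + x 2 ^ 2 + x 3 ^ 2) * x 0 + x 4 * x 1) ^ 2 -
        (x 0 ^ 2 + x 1 ^ 2 + x 2 ^ 2 + x 3 ^ 2 + 2 * x 0 ^ 2 + 2 * x 1 ^ 2) * gauge4 x) /
      gauge4 x ^ 3 := by
  rw [X1, pdR_mul_inv_gauge4_sq _ (by fun_prop) h fun y => X1_phiR,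
    pdR_mul_inv_gauge4_sq _ (by fun_prop) h fun y => X1_phiR]
  simp (disch := fun_prop) only [pdR_add, pdR_mul, pdR_sq, pdR_coord, pdR_const,
    pdR_gauge4]
  simp
  ring

lemma X2_phiR {x : Fin 5 → ℝ} (h : gauge4 x ≠ 0) :
    X2 phiR x = (-2 * ((x 0 ^ 2 + x 1 ^ 2 + x 2 ^ 2 + x 3 ^ 2) * x 1 - x 4 * x 0)) *
      (gauge4 x ^ 2)⁻¹ := by
  simp only [X2, pdR_phiR _ h, pdR_gauge4]
  simp
  ring

lemma X2_X2_phiR {x : Fin 5 → ℝ} (h : gauge4 x ≠ 0) :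
    X2 (X2 phiR) x =
      (8 * ((x 0 ^ 2 + x 1 ^ 2 + x 2 ^ 2 + x 3 ^ 2) * x 1 - x 4 * x 0) ^ 2 -
        (x 0 ^ 2 + x 1 ^ 2 + x 2 ^ 2 + x 3 ^ 2 + 2 * x 1 ^ 2 + 2 * x 0 ^ 2) * gauge4 x) /
      gauge4 x ^ 3 := by
  rw [X2, pdR_mul_inv_gauge4_sq _ (by fun_prop) h fun y => X2_phiR,
    pdR_mul_inv_gauge4_sq _ (by fun_prop) h fun y => X2_phiR]
  simp (disch := fun_prop) only [pdR_add, pdR_sub, pdR_mul, pdR_sq, pdR_coord, pdR_const,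
    pdR_gauge4]
  simp
  ring

lemma X3_phiR {x : Fin 5 → ℝ} (h : gauge4 x ≠ 0) :
    X3 phiR x = (-2 * ((x 0 ^ 2 + x 1 ^ 2 + x 2 ^ 2 + x 3 ^ 2) * x 2 + x 4 * x 3)) *
      (gauge4 x ^ 2)⁻¹ := by
  simp only [X3, pdR_phiR _ h, pdR_gauge4]
  simp
  ring

lemma X3_X3_phiR {x : Fin 5 → ℝ} (h : gauge4 x ≠ 0) :
    X3 (X3 phiR) x =
      (8 * ((x 0 ^ 2 + x 1 ^ 2 + x 2 ^ 2 + x 3 ^ 2) * x 2 + x 4 * x 3) ^ 2 -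
        (x 0 ^ 2 + x 1 ^ 2 + x 2 ^ 2 + x 3 ^ 2 + 2 * x 2 ^ 2 + 2 * x 3 ^ 2) * gauge4 x) /
      gauge4 x ^ 3 := by
  rw [X3, pdR_mul_inv_gauge4_sq _ (by fun_prop) h fun y => X3_phiR,
    pdR_mul_inv_gauge4_sq _ (by fun_prop) h fun y => X3_phiR]
  simp (disch := fun_prop) only [pdR_add, pdR_mul, pdR_sq, pdR_coord, pdR_const,
    pdR_gauge4]
  simp
  ring

lemma X4_phiR {x : Fin 5 → ℝ} (h : gauge4 x ≠ 0) :
    X4 phiR x = (-2 * ((x 0 ^ 2 + x 1 ^ 2 + x 2 ^ 2 + x 3 ^ 2) * x 3 - x 4 * x 2)) *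
      (gauge4 x ^ 2)⁻¹ := by
  simp only [X4, pdR_phiR _ h, pdR_gauge4]
  simp
  ring

lemma X4_X4_phiR {x : Fin 5 → ℝ} (h : gauge4 x ≠ 0) :
    X4 (X4 phiR) x =
      (8 * ((x 0 ^ 2 + x 1 ^ 2 + x 2 ^ 2 + x 3 ^ 2) * x 3 - x 4 * x 2) ^ 2 -
        (x 0 ^ 2 + x 1 ^ 2 + x 2 ^ 2 + x 3 ^ 2 + 2 * x 3 ^ 2 + 2 * x 2 ^ 2) * gauge4 x) /
      gauge4 x ^ 3 := by
  rw [X4, pdR_mul_inv_gauge4_sq _ (by fun_prop) h fun y => X4_phiR,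
    pdR_mul_inv_gauge4_sq _ (by fun_prop) h fun y => X4_phiR]
  simp (disch := fun_prop) only [pdR_add, pdR_sub, pdR_mul, pdR_sq, pdR_coord, pdR_const,
    pdR_gauge4]
  simp
  ring

/-- `φ = 1/(|x|⁴ + s²)` solves the sub-Laplacian equation
`Δ_bφ = X₁²φ + X₂²φ + X₃²φ + X₄²φ = 0` wherever `|x|⁴ + s² ≠ 0`. -/
theorem phiR_harmonic (x : Fin 5 → ℝ)
    (h : (x 0 ^ 2 + x 1 ^ 2 + x 2 ^ 2 + x 3 ^ 2) ^ 2 + (x 4) ^ 2 ≠ 0) :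
    X1 (X1 phiR) x + X2 (X2 phiR) x + X3 (X3 phiR) x + X4 (X4 phiR) x = 0 := by
  have hN : gauge4 x ≠ 0 := h
  rw [X1_X1_phiR hN, X2_X2_phiR hN, X3_X3_phiR hN, X4_X4_phiR hN, ← add_div, ← add_div, ← add_div,
    div_eq_zero_iff]
  left
  unfold gauge4
  ring
end

section
/- (Poincaré-type lemma for the partial exterior differentials) Let g₀, g₁ : ℂ⁵ → ℂ be holomorphic (entire). If V₁₀′g₀ = V₀₀′g₁ on ℂ⁵ (i.e. the 1-form g₀θ^{00′} + g₁θ^{10′} is d₀-closed), then there exists a holomorphic function f : ℂ⁵ → ℂ with V₀₀′f = g₀ and V₁₀′f = g₁. Similarly, if V₁₁′g₀ = V₀₁′g₁ on ℂ⁵, then there exists a holomorphic f with V₀₁′f = g₀ and V₁₁′f = g₁. -/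
section Calculus

variable {E : Type*} [NormedAddCommGroup E] [NormedSpace ℂ E]

/-- Cauchy integral formula for the directional derivatives of an entire function. -/
theorem fderiv_apply_eq_circleIntegral {g : E → ℂ} (hg : Differentiable ℂ g) (y v : E) :
    fderiv ℂ g y v =
      (2 * Real.pi * Complex.I)⁻¹ * ∮ z in C(0, 1), (1 / (z - 0) ^ 2) • g (y + z • v) := by
  have hline : Differentiable ℂ fun z : ℂ ↦ g (y + z • v) := by fun_prop
  have hderiv : deriv (fun z : ℂ ↦ g (y + z • v)) 0 = fderiv ℂ g y v := by
    have hlineDeriv : HasDerivAt (fun z : ℂ ↦ g (y + z • v)) (fderiv ℂ g y v) 0 :=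
      (hg y).hasFDerivAt.hasLineDerivAt v
    exact hlineDeriv.deriv
  rw [hline.diffContOnCl.deriv_eq_smul_circleIntegral one_pos, hderiv, smul_eq_mul,
    inv_mul_cancel_left₀ Complex.two_pi_I_ne_zero]

variable [FiniteDimensional ℂ E]

/-- The derivative of an entire function on a finite-dimensional space is continuous. -/
theorem continuous_fderiv_of_differentiable {g : E → ℂ}
    (hg : Differentiable ℂ g) : Continuous (fderiv ℂ g) := by
  rw [continuous_clm_apply]
  intro v
  simp_rw [fderiv_apply_eq_circleIntegral hg, circleIntegral]
  refine continuous_const.mul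
    (intervalIntegral.continuous_parametric_intervalIntegral_of_continuous' ?_ _ _)
  have hgc := hg.continuous
  have hcirc : Continuous fun p : E × ℝ ↦ circleMap 0 1 p.2 :=
    (continuous_circleMap 0 1).comp continuous_snd
  have hne : ∀ p : E × ℝ, (circleMap 0 1 p.2 - 0) ^ 2 ≠ 0 := fun p ↦ by
    rw [sub_zero]
    exact pow_ne_zero 2 (circleMap_ne_center one_ne_zero)
  have hinv : Continuous fun p : E × ℝ ↦ 1 / (circleMap 0 1 p.2 - 0) ^ 2 :=
    continuous_const.div ((hcirc.sub continuous_const).pow 2) hne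
  have hval : Continuous fun p : E × ℝ ↦ g (p.1 + circleMap 0 1 p.2 • v) := by fun_prop
  simp only [deriv_circleMap, Function.uncurry_def]
  exact (hcirc.mul continuous_const).smul (hinv.smul hval)

/-- Differentiation under the integral sign for a continuously differentiable integrand over
the unit interval. -/
theorem hasFDerivAt_intervalIntegral_of_continuous {F : E → ℝ → ℂ} {F' : E → ℝ → E →L[ℂ] ℂ}
    (hF : Continuous F.uncurry) (hF' : Continuous F'.uncurry)
    (hderiv : ∀ y s, HasFDerivAt (fun x ↦ F x s) (F' y s) y) (y : E) :
    HasFDerivAt (fun x ↦ ∫ s in (0 : ℝ)..1, F x s) (∫ s in (0 : ℝ)..1, F' y s) y := by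
  have : ProperSpace E := FiniteDimensional.proper ℂ E
  obtain ⟨C, hC⟩ := ((isCompact_closedBall y 1).prod (isCompact_Icc (a := (0 : ℝ)) (b := 1)))
    |>.exists_bound_of_continuousOn hF'.continuousOn
  have hFy : ∀ x, Continuous (F x) := fun x ↦ hF.comp (by fun_prop : Continuous fun s ↦ (x, s))
  have hFy' : Continuous (F' y) := hF'.comp (by fun_prop : Continuous fun s ↦ (y, s))
  refine intervalIntegral.hasFDerivAt_integral_of_dominated_of_fderiv_le (bound := fun _ ↦ C)
    (Metric.closedBall_mem_nhds y one_pos)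
    (.of_forall fun x ↦ (hFy x).aestronglyMeasurable)
    ((hFy y).intervalIntegrable _ _) hFy'.aestronglyMeasurable
    (.of_forall fun s hs x hx ↦ ?_) intervalIntegrable_const
    (.of_forall fun s _ x _ ↦ hderiv x s)
  rw [Set.uIoc_of_le zero_le_one] at hs
  exact hC (x, s) ⟨hx, hs.1.le, hs.2⟩

end Calculus

section Primitive

variable {ι : Type*} [DecidableEq ι]

/-- The linear map of `ι → ℂ` scaling the coordinates `i` and `j` by `s`. -/
noncomputable def scaleCoords (i j : ι) (s : ℝ) : (ι → ℂ) →L[ℂ] (ι → ℂ) :=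
  ContinuousLinearMap.id ℂ (ι → ℂ) - (1 - (s : ℂ)) •
    ((ContinuousLinearMap.proj (R := ℂ) (φ := fun _ : ι ↦ ℂ) i).smulRight (Pi.single i (1 : ℂ)) +
      (ContinuousLinearMap.proj (R := ℂ) (φ := fun _ : ι ↦ ℂ) j).smulRight (Pi.single j (1 : ℂ)))

theorem scaleCoords_apply (i j : ι) (s : ℝ) (y : ι → ℂ) :
    scaleCoords i j s y =
      y - (1 - (s : ℂ)) • (y i • Pi.single i (1 : ℂ) + y j • Pi.single j (1 : ℂ)) := by
  simp [scaleCoords]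

theorem scaleCoords_comm (i j : ι) (s : ℝ) : scaleCoords i j s = scaleCoords j i s := by
  rw [scaleCoords, scaleCoords, add_comm]

theorem scaleCoords_single {i j : ι} (hij : i ≠ j) (s : ℝ) :
    scaleCoords i j s (Pi.single i 1) = (s : ℂ) • Pi.single i (1 : ℂ) := by
  rw [scaleCoords_apply]
  simp only [Pi.single_eq_same, Pi.single_eq_of_ne hij.symm, one_smul, zero_smul, add_zero]
  module

@[fun_prop]
theorem continuous_scaleCoords (i j : ι) : Continuous (scaleCoords i j) := by
  unfold scaleCoords
  fun_prop

/-- The radial primitive of `G₀ dyᵢ + G₁ dyⱼ` in the `(i, j)`-plane through each point. -/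
noncomputable def planePrimitive (i j : ι) (G₀ G₁ : (ι → ℂ) → ℂ) (y : ι → ℂ) : ℂ :=
  ∫ s in (0 : ℝ)..1, (y i * G₀ (scaleCoords i j s y) + y j * G₁ (scaleCoords i j s y))

theorem planePrimitive_comm (i j : ι) (G₀ G₁ : (ι → ℂ) → ℂ) :
    planePrimitive i j G₀ G₁ = planePrimitive j i G₁ G₀ := by
  funext y
  simp only [planePrimitive, scaleCoords_comm i j]
  simp only [add_comm]

/-- The derivative in `y` of the integrand of `planePrimitive`. -/
noncomputable def planeIntegrandDeriv (i j : ι) (G₀ G₁ : (ι → ℂ) → ℂ) (y : ι → ℂ) (s : ℝ) :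
    (ι → ℂ) →L[ℂ] ℂ :=
  (y i • (fderiv ℂ G₀ (scaleCoords i j s y)).comp (scaleCoords i j s) +
      G₀ (scaleCoords i j s y) • ContinuousLinearMap.proj (R := ℂ) (φ := fun _ : ι ↦ ℂ) i) +
    (y j • (fderiv ℂ G₁ (scaleCoords i j s y)).comp (scaleCoords i j s) +
      G₁ (scaleCoords i j s y) • ContinuousLinearMap.proj (R := ℂ) (φ := fun _ : ι ↦ ℂ) j)

variable [Fintype ι] {i j : ι} {G₀ G₁ : (ι → ℂ) → ℂ}

theorem continuous_planeIntegrandDeriv (hG₀ : Differentiable ℂ G₀) (hG₁ : Differentiable ℂ G₁) :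
    Continuous (planeIntegrandDeriv i j G₀ G₁).uncurry := by
  have h₀ := hG₀.continuous
  have h₁ := hG₁.continuous
  have h₀' := continuous_fderiv_of_differentiable hG₀
  have h₁' := continuous_fderiv_of_differentiable hG₁
  simp only [Function.uncurry_def, planeIntegrandDeriv]
  fun_prop

theorem hasFDerivAt_planePrimitive (hG₀ : Differentiable ℂ G₀) (hG₁ : Differentiable ℂ G₁)
    (y : ι → ℂ) :
    HasFDerivAt (planePrimitive i j G₀ G₁)
      (∫ s in (0 : ℝ)..1, planeIntegrandDeriv i j G₀ G₁ y s) y := by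
  have h₀ := hG₀.continuous
  have h₁ := hG₁.continuous
  refine hasFDerivAt_intervalIntegral_of_continuous ?_ (continuous_planeIntegrandDeriv hG₀ hG₁)
    (fun x s ↦ ?_) y
  · simp only [Function.uncurry_def]
    fun_prop
  · have hcoord : ∀ k : ι, HasFDerivAt (fun x : ι → ℂ ↦ x k)
        (ContinuousLinearMap.proj (R := ℂ) (φ := fun _ : ι ↦ ℂ) k) x :=
      fun k ↦ (ContinuousLinearMap.proj (R := ℂ) (φ := fun _ : ι ↦ ℂ) k).hasFDerivAt
    have hcomp : ∀ {G : (ι → ℂ) → ℂ}, Differentiable ℂ G →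
        HasFDerivAt (fun x ↦ G (scaleCoords i j s x))
          ((fderiv ℂ G (scaleCoords i j s x)).comp (scaleCoords i j s)) x :=
      fun hG ↦ (hG _).hasFDerivAt.comp x (scaleCoords i j s).hasFDerivAt
    exact ((hcoord i).mul (hcomp hG₀)).add ((hcoord j).mul (hcomp hG₁))

/-- If `G₀ dyᵢ + G₁ dyⱼ` is closed in the `(i, j)`-planes, then its radial primitive has
`i`-th partial derivative `G₀`. -/
theorem fderiv_planePrimitive_single (hij : i ≠ j) (hG₀ : Differentiable ℂ G₀)
    (hG₁ : Differentiable ℂ G₁)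
    (hclosed : ∀ y, fderiv ℂ G₀ y (Pi.single j 1) = fderiv ℂ G₁ y (Pi.single i 1))
    (y : ι → ℂ) : fderiv ℂ (planePrimitive i j G₀ G₁) y (Pi.single i 1) = G₀ y := by
  have hcont : Continuous (planeIntegrandDeriv i j G₀ G₁ y) :=
    (continuous_planeIntegrandDeriv hG₀ hG₁).comp (by fun_prop : Continuous fun s ↦ (y, s))
  rw [(hasFDerivAt_planePrimitive hG₀ hG₁ y).fderiv,
    ContinuousLinearMap.intervalIntegral_apply (hcont.intervalIntegrable _ _)]
  have hpath : ∀ s : ℝ, HasDerivAt (fun s : ℝ ↦ scaleCoords i j s y)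
      (y i • Pi.single i (1 : ℂ) + y j • Pi.single j (1 : ℂ)) s := by
    intro s
    simp only [scaleCoords_apply]
    have h := (((Complex.ofRealCLM.hasDerivAt (x := s)).const_sub (1 : ℂ)).smul_const
      (y i • Pi.single i (1 : ℂ) + y j • Pi.single j (1 : ℂ))).const_sub y
    exact h.congr_deriv (by simp [add_comm])
  have hradial : ∀ s : ℝ, HasDerivAt (fun s : ℝ ↦ (s : ℂ) * G₀ (scaleCoords i j s y))
      (planeIntegrandDeriv i j G₀ G₁ y s (Pi.single i 1)) s := by
    intro s
    have hG := ((hG₀ (scaleCoords i j s y)).hasFDerivAt.restrictScalars ℝ).comp_hasDerivAt s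
      (hpath s)
    refine ((Complex.ofRealCLM.hasDerivAt (x := s)).mul hG).congr_deriv ?_
    simp [planeIntegrandDeriv, scaleCoords_single hij, hij.symm, hclosed]
    ring
  rw [intervalIntegral.integral_eq_sub_of_hasDerivAt (fun s _ ↦ hradial s)
    ((hcont.clm_apply continuous_const).intervalIntegrable _ _)]
  simp [scaleCoords_apply]

/-- Poincaré lemma with holomorphic parameters for entire 1-forms in two of the coordinates. -/
theorem exists_primitive_of_closed (hij : i ≠ j) (hG₀ : Differentiable ℂ G₀)
    (hG₁ : Differentiable ℂ G₁)
    (hclosed : ∀ y, fderiv ℂ G₀ y (Pi.single j 1) = fderiv ℂ G₁ y (Pi.single i 1)) :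
    ∃ F : (ι → ℂ) → ℂ, Differentiable ℂ F ∧ (∀ y, fderiv ℂ F y (Pi.single i 1) = G₀ y) ∧
      ∀ y, fderiv ℂ F y (Pi.single j 1) = G₁ y := by
  refine ⟨planePrimitive i j G₀ G₁,
    fun y ↦ (hasFDerivAt_planePrimitive hG₀ hG₁ y).differentiableAt,
    fderiv_planePrimitive_single hij hG₀ hG₁ hclosed, ?_⟩
  rw [planePrimitive_comm]
  exact fderiv_planePrimitive_single hij.symm hG₁ hG₀ fun y ↦ (hclosed y).symm

end Primitive

section Shear

/-- The map adding the quadratic form `c (y₀ y₃ + y₁ y₂)` to the last coordinate. -/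
def heisenbergShear (c : ℂ) (y : Fin 5 → ℂ) : Fin 5 → ℂ :=
  y + (c * (y 0 * y 3 + y 1 * y 2)) • Pi.single 4 (1 : ℂ)

theorem heisenbergShear_apply_of_ne (c : ℂ) (y : Fin 5 → ℂ) {k : Fin 5} (hk : k ≠ 4) :
    heisenbergShear c y k = y k := by
  simp [heisenbergShear, hk]

theorem heisenbergShear_neg_heisenbergShear (c : ℂ) (y : Fin 5 → ℂ) :
    heisenbergShear c (heisenbergShear (-c) y) = y := by
  rw [heisenbergShear]
  simp only [heisenbergShear_apply_of_ne (-c) y (show (0 : Fin 5) ≠ 4 by decide),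
    heisenbergShear_apply_of_ne (-c) y (show (1 : Fin 5) ≠ 4 by decide),
    heisenbergShear_apply_of_ne (-c) y (show (2 : Fin 5) ≠ 4 by decide),
    heisenbergShear_apply_of_ne (-c) y (show (3 : Fin 5) ≠ 4 by decide)]
  rw [heisenbergShear]
  module

theorem differentiable_heisenbergShear (c : ℂ) : Differentiable ℂ (heisenbergShear c) := by
  unfold heisenbergShear
  fun_prop

/-- Chain rule for a composition with `heisenbergShear` along a coordinate line. -/
theorem fderiv_comp_heisenbergShear {f : (Fin 5 → ℂ) → ℂ} (hf : Differentiable ℂ f) (c : ℂ)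
    (y : Fin 5 → ℂ) {k l : Fin 5}
    (hkl : ∀ (z : ℂ) (x : Fin 5 → ℂ), x = y + z • Pi.single k (1 : ℂ) →
      x 0 * x 3 + x 1 * x 2 = y 0 * y 3 + y 1 * y 2 + z * y l) :
    fderiv ℂ (f ∘ heisenbergShear c) y (Pi.single k 1) =
      pd k f (heisenbergShear c y) + c * y l * pd 4 f (heisenbergShear c y) := by
  have hline : HasDerivAt (fun z : ℂ ↦ heisenbergShear c (y + z • Pi.single k (1 : ℂ)))
      (Pi.single k (1 : ℂ) + (c * y l) • Pi.single 4 (1 : ℂ)) 0 := by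
    simp only [heisenbergShear, hkl _ _ rfl]
    have h₁ := ((hasDerivAt_id (0 : ℂ)).smul_const (Pi.single k (1 : ℂ) : Fin 5 → ℂ)).const_add y
    have h₂ := ((((hasDerivAt_id (0 : ℂ)).mul_const (y l)).const_add
      (y 0 * y 3 + y 1 * y 2)).const_mul c).smul_const (Pi.single 4 (1 : ℂ) : Fin 5 → ℂ)
    exact (h₁.add h₂).congr_deriv (by simp)
  have hshear : HasDerivAt (fun z : ℂ ↦ heisenbergShear c (y + z • Pi.single k (1 : ℂ)))
      (fderiv ℂ (heisenbergShear c) y (Pi.single k 1)) 0 :=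
    (differentiable_heisenbergShear c y).hasFDerivAt.hasLineDerivAt _
  rw [fderiv_comp y (hf _) (differentiable_heisenbergShear c y),
    ContinuousLinearMap.comp_apply, hshear.unique hline]
  simp [pd]

theorem fderiv_comp_shear_zero {f : (Fin 5 → ℂ) → ℂ} (hf : Differentiable ℂ f) (y : Fin 5 → ℂ) :
    fderiv ℂ (f ∘ heisenbergShear (-1)) y (Pi.single 0 1) = V00 f (heisenbergShear (-1) y) := by
  rw [fderiv_comp_heisenbergShear hf (-1) y (l := 3) fun z x hx ↦ by simp [hx]; ring, V00,
    heisenbergShear_apply_of_ne _ _ (by decide)]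
  ring

theorem fderiv_comp_shear_one {f : (Fin 5 → ℂ) → ℂ} (hf : Differentiable ℂ f) (y : Fin 5 → ℂ) :
    fderiv ℂ (f ∘ heisenbergShear (-1)) y (Pi.single 1 1) = V10 f (heisenbergShear (-1) y) := by
  rw [fderiv_comp_heisenbergShear hf (-1) y (l := 2) fun z x hx ↦ by simp [hx]; ring, V10,
    heisenbergShear_apply_of_ne _ _ (by decide)]
  ring

theorem fderiv_comp_shear_two {f : (Fin 5 → ℂ) → ℂ} (hf : Differentiable ℂ f) (y : Fin 5 → ℂ) :
    fderiv ℂ (f ∘ heisenbergShear 1) y (Pi.single 2 1) = V01 f (heisenbergShear 1 y) := by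
  rw [fderiv_comp_heisenbergShear hf 1 y (l := 1) fun z x hx ↦ by simp [hx]; ring, V01,
    heisenbergShear_apply_of_ne _ _ (by decide)]
  ring

theorem fderiv_comp_shear_three {f : (Fin 5 → ℂ) → ℂ} (hf : Differentiable ℂ f)
    (y : Fin 5 → ℂ) :
    fderiv ℂ (f ∘ heisenbergShear 1) y (Pi.single 3 1) = V11 f (heisenbergShear 1 y) := by
  rw [fderiv_comp_heisenbergShear hf 1 y (l := 0) fun z x hx ↦ by simp [hx]; ring, V11,
    heisenbergShear_apply_of_ne _ _ (by decide)]
  ring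

/-- Poincaré lemma for two differential operators that a shear turns into partial derivatives. -/
theorem exists_primitive_of_shear {V W : ((Fin 5 → ℂ) → ℂ) → (Fin 5 → ℂ) → ℂ} {c : ℂ}
    {i j : Fin 5} (hij : i ≠ j)
    (hV : ∀ {f : (Fin 5 → ℂ) → ℂ}, Differentiable ℂ f → ∀ y,
      fderiv ℂ (f ∘ heisenbergShear c) y (Pi.single i 1) = V f (heisenbergShear c y))
    (hW : ∀ {f : (Fin 5 → ℂ) → ℂ}, Differentiable ℂ f → ∀ y,
      fderiv ℂ (f ∘ heisenbergShear c) y (Pi.single j 1) = W f (heisenbergShear c y))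
    {g₀ g₁ : (Fin 5 → ℂ) → ℂ} (hg₀ : Differentiable ℂ g₀) (hg₁ : Differentiable ℂ g₁)
    (hclosed : ∀ y, W g₀ y = V g₁ y) :
    ∃ f : (Fin 5 → ℂ) → ℂ, Differentiable ℂ f ∧ (∀ y, V f y = g₀ y) ∧ ∀ y, W f y = g₁ y := by
  have hs := differentiable_heisenbergShear c
  obtain ⟨F, hF, hF₀, hF₁⟩ := exists_primitive_of_closed hij (hg₀.comp hs) (hg₁.comp hs)
    fun y ↦ by rw [hW hg₀, hV hg₁, hclosed]
  have hf : Differentiable ℂ (F ∘ heisenbergShear (-c)) :=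
    hF.comp (differentiable_heisenbergShear (-c))
  have hfF : (F ∘ heisenbergShear (-c)) ∘ heisenbergShear c = F := by
    funext y
    simpa using congrArg F (heisenbergShear_neg_heisenbergShear (-c) y)
  refine ⟨F ∘ heisenbergShear (-c), hf, fun y ↦ ?_, fun y ↦ ?_⟩
  · have h := hV hf (heisenbergShear (-c) y)
    rwa [hfF, hF₀, Function.comp_apply, heisenbergShear_neg_heisenbergShear, eq_comm] at h
  · have h := hW hf (heisenbergShear (-c) y)
    rwa [hfF, hF₁, Function.comp_apply, heisenbergShear_neg_heisenbergShear, eq_comm] at h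

end Shear

/-- Poincaré-type lemma for the partial exterior differentials `d₀` and `d₁` on `ℂ⁵`:
a `d₀`-closed (resp. `d₁`-closed) holomorphic 1-form is `d₀`-exact (resp. `d₁`-exact). -/
theorem partial_poincare_lemma (g0 g1 : (Fin 5 → ℂ) → ℂ)
    (hg0 : Differentiable ℂ g0) (hg1 : Differentiable ℂ g1) :
    ((∀ y, V10 g0 y = V00 g1 y) →
      ∃ f : (Fin 5 → ℂ) → ℂ, Differentiable ℂ f ∧
        (∀ y, V00 f y = g0 y) ∧ (∀ y, V10 f y = g1 y)) ∧
    ((∀ y, V11 g0 y = V01 g1 y) →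
      ∃ f : (Fin 5 → ℂ) → ℂ, Differentiable ℂ f ∧
        (∀ y, V01 f y = g0 y) ∧ (∀ y, V11 f y = g1 y)) := by
  exact ⟨exists_primitive_of_shear (i := 0) (j := 1) (by decide) fderiv_comp_shear_zero
      fderiv_comp_shear_one hg0 hg1,
    exists_primitive_of_shear (i := 2) (j := 3) (by decide) fderiv_comp_shear_two
      fderiv_comp_shear_three hg0 hg1⟩
end

section
/- Let x = (x₁, x₂, x₃, x₄, s₁) and y = (y₁, y₂, y₃, y₄, s₂) be points of ℝ⁵, embedded into ℂ⁵ by x₀₀′ = x₁ + ix₂, x₁₀′ = x₃ + ix₄, x₀₁′ = −x₃ + ix₄, x₁₁′ = x₁ − ix₂, t = −is₁ (and similarly for y with t = −is₂). If there exists ζ ∈ ℂ such that x₀₀′ + ζx₀₁′ = y₀₀′ + ζy₀₁′, x₁₀′ + ζx₁₁′ = y₁₀′ + ζy₁₁′, and −is₁ − (x₀₀′x₁₁′ + x₁₀′x₀₁′ + 2ζ x₀₁′x₁₁′) = −is₂ − (y₀₀′y₁₁′ + y₁₀′y₀₁′ + 2ζ y₀₁′y₁₁′), then x = y (all five real coordinates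 agree). Consequently the projective lines x̂ = η∘τ⁻¹(x) and ŷ = η∘τ⁻¹(y) over distinct real points are disjoint, so the real twistor fibration is a trivial ℂP¹-bundle over ℝ⁵. -/
open Complex

/-- The embedding `ℝ⁵ ↪ ℂ⁵` of the real Heisenberg group:
`x₀₀′ = x₁ + ix₂`, `x₁₀′ = x₃ + ix₄`, `x₀₁′ = −x₃ + ix₄`, `x₁₁′ = x₁ − ix₂`. -/
noncomputable def c00 (x1 x2 : ℝ) : ℂ := (x1 : ℂ) + I * x2
noncomputable def c10 (x3 x4 : ℝ) : ℂ := (x3 : ℂ) + I * x4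
noncomputable def c01 (x3 x4 : ℝ) : ℂ := -(x3 : ℂ) + I * x4
noncomputable def c11 (x1 x2 : ℝ) : ℂ := (x1 : ℂ) - I * x2

/-- If the twistor lines `x̂` and `ŷ` of two real points of the 5D real Heisenberg group
meet (in the finite chart), then the points coincide. Hence the real twistor fibration is a
trivial `ℂP¹`-bundle over `ℝ⁵`. -/
theorem real_twistor_lines_disjoint (x1 x2 x3 x4 s1 y1 y2 y3 y4 s2 : ℝ)
    (h : ∃ ζ : ℂ,
      c00 x1 x2 + ζ * c01 x3 x4 = c00 y1 y2 + ζ * c01 y3 y4 ∧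
      c10 x3 x4 + ζ * c11 x1 x2 = c10 y3 y4 + ζ * c11 y1 y2 ∧
      -I * s1 - (c00 x1 x2 * c11 x1 x2 + c10 x3 x4 * c01 x3 x4
                  + 2 * ζ * c01 x3 x4 * c11 x1 x2)
        = -I * s2 - (c00 y1 y2 * c11 y1 y2 + c10 y3 y4 * c01 y3 y4
                  + 2 * ζ * c01 y3 y4 * c11 y1 y2)) :
    x1 = y1 ∧ x2 = y2 ∧ x3 = y3 ∧ x4 = y4 ∧ s1 = s2 := by
  obtain ⟨ζ, h₁, h₂, h₃⟩ := h
  have hsum : (x1 - y1) ^ 2 + (x2 - y2) ^ 2 + (x3 - y3) ^ 2 + (x4 - y4) ^ 2 = 0 := by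
    have hc : ((x1 : ℂ) - y1) ^ 2 + (x2 - y2) ^ 2 + (x3 - y3) ^ 2 + (x4 - y4) ^ 2 = 0 := by
      simp only [c00, c01, c10, c11] at h₁ h₂
      linear_combination (((x1 : ℂ) - y1) - I * (x2 - y2)) * h₁
        - (-((x3 : ℂ) - y3) + I * (x4 - y4)) * h₂
        + (((x2 : ℂ) - y2) ^ 2 + (x4 - y4) ^ 2) * I_sq
    exact_mod_cast hc
  have e1 : x1 = y1 := by nlinarith
  have e2 : x2 = y2 := by nlinarith
  have e3 : x3 = y3 := by nlinarith
  have e4 : x4 = y4 := by nlinarith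
  subst e1 e2 e3 e4
  refine ⟨rfl, rfl, rfl, rfl, ?_⟩
  have hs : I * (s1 : ℂ) = I * s2 := by linear_combination -h₃
  exact_mod_cast mul_left_cancel₀ I_ne_zero hs
end

section
/- For every ζ ∈ ℂ and every (y, t) ∈ ℂ⁵ one has the 6×6 matrix identities P_ζᵗ·I·P_ζ = I (so P_ζ ∈ SO(6, ℂ)) and P_ζ⁻¹·H(y₀′, y₁′, t)·P_ζ = H(y₀′ + ζy₁′, y₁′, t), where H(y₀′ + ζy₁′, y₁′, t) denotes H evaluated at the point with first pair of coordinates (y₀₀′ + ζy₀₁′, y₁₀′ + ζy₁₁′), second pair (y₀₁′, y₁₁′), and last coordinate t. -/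
/-- The 6×6 matrix `H(y,t)` representing the Heisenberg group element
`(y₀₀′, y₁₀′, y₀₁′, y₁₁′, t) = (a, b, c, d, t)` inside `SO(6, ℂ)`; here
`⟨y₀′,y₀′⟩ = 2ab`, `⟨y₀′,y₁′⟩ = ad + cb`, `⟨y₁′,y₁′⟩ = 2cd`. -/
noncomputable def Hmat (a b c d t : ℂ) : Matrix (Fin 6) (Fin 6) ℂ :=
  !![1, 0, 0, 0, 0, 0;
     0, 1, 0, 0, 0, 0;
     a, c, 1, 0, 0, 0;
     -(a * b), -(t / 2) - (a * d + c * b) / 2, -b, 1, 0, -a;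
     t / 2 - (a * d + c * b) / 2, -(c * d), -d, 0, 1, -c;
     b, d, 0, 0, 0, 1]
open scoped Matrix

/-- The quadratic form matrix `I = [[0, E₃],[E₃, 0]]` defining `SO(6, ℂ)`. -/
noncomputable def Imat : Matrix (Fin 6) (Fin 6) ℂ :=
  !![0, 0, 0, 1, 0, 0;
     0, 0, 0, 0, 1, 0;
     0, 0, 0, 0, 0, 1;
     1, 0, 0, 0, 0, 0;
     0, 1, 0, 0, 0, 0;
     0, 0, 1, 0, 0, 0]

/-- `P_ζ`: the identity except that its `(2,1)` entry is `ζ` and its `(4,5)` entry is `−ζ`. -/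
noncomputable def Pmat (ζ : ℂ) : Matrix (Fin 6) (Fin 6) ℂ :=
  !![1, 0, 0, 0, 0, 0;
     ζ, 1, 0, 0, 0, 0;
     0, 0, 1, 0, 0, 0;
     0, 0, 0, 1, -ζ, 0;
     0, 0, 0, 0, 1, 0;
     0, 0, 0, 0, 0, 1]

theorem Pmat_neg_mul_Pmat (ζ : ℂ) : Pmat (-ζ) * Pmat ζ = 1 := by
  ext i j
  fin_cases i <;> fin_cases j <;>
    simp [Pmat, Matrix.mul_apply, Fin.sum_univ_succ]

theorem Pmat_inv (ζ : ℂ) : (Pmat ζ)⁻¹ = Pmat (-ζ) :=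
  Matrix.inv_eq_left_inv (Pmat_neg_mul_Pmat ζ)

/-- `P_ζᵗ·I·P_ζ = I` (so `P_ζ ∈ SO(6, ℂ)`), and
`P_ζ⁻¹·H(y₀′, y₁′, t)·P_ζ = H(y₀′ + ζy₁′, y₁′, t)`. -/
theorem Pmat_conjugation (ζ a b c d t : ℂ) :
    (Pmat ζ)ᵀ * Imat * Pmat ζ = Imat ∧
    (Pmat ζ)⁻¹ * Hmat a b c d t * Pmat ζ = Hmat (a + ζ * c) (b + ζ * d) c d t := by
  refine ⟨?_, ?_⟩
  · ext i j
    fin_cases i <;> fin_cases j <;>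
      simp [Pmat, Imat, Matrix.mul_apply, Fin.sum_univ_succ]
  · rw [Pmat_inv]
    ext i j
    fin_cases i <;> fin_cases j <;>
      simp [Pmat, Hmat, Matrix.mul_apply, Fin.sum_univ_succ] <;> ring
end
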